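/- (Glazman) Let C be a conjugation on a complex Hilbert space H and let T be a densely defined, dissipative, C-symmetric operator in H. Then T admits a C-self-adjoint maximal dissipative extension: there exists an operator T̃ in H such that dom T ⊆ dom T̃, T̃ f = T f for all f ∈ dom T, T̃ is maximal dissipative, and T̃ is C-self-adjoint, i.e. dom T̃ = {C y : y ∈ dom T̃*} and T̃(C y) = C(T̃* y) for all y ∈ dom T̃*. -/

import Mathlib

local notation "⟪" x ", " y "⟫" => @inner ℂ _ _ x y

/-- A conjugation on a complex inner product space: additive, conjugate-homogeneous,
isometric and involutive. -/
def IsConjugation {H : Type*} [NormedAddCommGroup H] [InnerProductSpace ℂ H]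
    (C : H → H) : Prop :=
  (∀ x y, C (x + y) = C x + C y) ∧
  (∀ (a : ℂ) (x : H), C (a • x) = (starRingEnd ℂ) a • C x) ∧
  (∀ x, ‖C x‖ = ‖x‖) ∧
  (∀ x, C (C x) = x)

/-- An (unbounded) operator `T` in `H` is dissipative if `Im ⟨T f, f⟩ ≥ 0` on its domain
(first argument of the inner product linear, i.e. `Im ⟪f, T f⟫_Mathlib ≥ 0`). -/
def IsDissipative {H : Type*} [NormedAddCommGroup H] [InnerProductSpace ℂ H]
    (T : H →ₗ.[ℂ] H) : Prop :=
  ∀ f : T.domain, 0 ≤ (⟪(f : H), T f⟫).im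

/-- `T` is maximal dissipative if it is dissipative and has no proper dissipative
extension. -/
def IsMaximalDissipative {H : Type*} [NormedAddCommGroup H] [InnerProductSpace ℂ H]
    (T : H →ₗ.[ℂ] H) : Prop :=
  IsDissipative T ∧ ∀ S : H →ₗ.[ℂ] H, IsDissipative S → T ≤ S → S = T

/-- `T` is `C`-symmetric: `⟨T f, C g⟩ = ⟨f, C (T g)⟩` for `f, g` in the domain (stated with
Mathlib's inner product, conjugate-linear in the first argument). -/
def IsCSymmetricPMap {H : Type*} [NormedAddCommGroup H] [InnerProductSpace ℂ H]
    (C : H → H) (T : H →ₗ.[ℂ] H) : Prop :=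
  ∀ f g : T.domain, ⟪C (g : H), T f⟫ = ⟪C (T g), (f : H)⟫

/-- `T` is `C`-self-adjoint: `dom T = C (dom T*)` and `T (C y) = C (T* y)` for
`y ∈ dom T*`. -/
def IsCSelfAdjointPMap {H : Type*} [NormedAddCommGroup H] [InnerProductSpace ℂ H]
    [CompleteSpace H] (C : H → H) (T : H →ₗ.[ℂ] H) : Prop :=
  ((T.domain : Set H) = C '' (T.adjoint.domain : Set H)) ∧
  ∀ y : T.adjoint.domain, ∀ hy : C (y : H) ∈ T.domain,
    T ⟨C (y : H), hy⟩ = C (T.adjoint y)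

theorem gl_douglas {H X : Type*} [NormedAddCommGroup H] [InnerProductSpace ℂ H] [CompleteSpace H]
    [AddCommGroup X] [Module ℂ X] (a b : X →ₗ[ℂ] H) (hab : ∀ x, ‖b x‖ ≤ ‖a x‖) :
    ∃ L : H →L[ℂ] H, (∀ h, ‖L h‖ ≤ ‖h‖) ∧ (∀ x, L (a x) = b x) ∧
      ∀ z, (∀ x, ⟪a x, z⟫ = 0) → L z = 0 := by
  let K : Submodule ℂ H := (LinearMap.range a).topologicalClosure
  have : CompleteSpace K := (Submodule.isClosed_topologicalClosure _).completeSpace_coe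
  have hmem : ∀ x, a x ∈ K := fun x => Submodule.le_topologicalClosure _ ⟨x, rfl⟩
  let e : X →ₗ[ℂ] K := a.codRestrict K hmem
  have hd : DenseRange e := by
    rw [DenseRange, Subtype.dense_iff]
    intro x hx
    have : (Subtype.val '' Set.range e) = (LinearMap.range a : Set H) := by
      ext y; constructor
      · rintro ⟨_, ⟨x, rfl⟩, rfl⟩; exact ⟨x, rfl⟩
      · rintro ⟨x, rfl⟩; exact ⟨_, ⟨x, rfl⟩, rfl⟩
    have h2 : x ∈ closure (LinearMap.range a : Set H) := hx
    rw [← this] at h2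
    exact h2
  have hn : ∀ x, ‖b x‖ ≤ 1 * ‖e x‖ := fun x => by rw [one_mul]; exact hab x
  refine ⟨(b.extendOfNorm e) ∘L K.orthogonalProjection, ?_, ?_, ?_⟩
  · intro h
    have h1 := LinearMap.norm_extendOfNorm_apply_le hd 1 hn (K.orthogonalProjection h)
    rw [one_mul] at h1
    exact h1.trans (K.norm_orthogonalProjection_apply_le h)
  · intro x
    have h2 : K.orthogonalProjection (a x) = e x :=
      Submodule.orthogonalProjection_mem_subspace_eq_self (K := K) (e x)
    rw [ContinuousLinearMap.comp_apply, h2]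
    exact LinearMap.extendOfNorm_eq hd ⟨1, hn⟩ x
  · intro z hz
    have h3 : z ∈ Kᗮ := by
      rw [Submodule.orthogonal_closure, Submodule.mem_orthogonal]
      rintro _ ⟨x, rfl⟩
      exact hz x
    rw [ContinuousLinearMap.comp_apply,
      Submodule.orthogonalProjection_mem_subspace_orthogonalComplement_eq_zero h3, map_zero]

theorem gl_defect {H : Type*} [NormedAddCommGroup H] [InnerProductSpace ℂ H] [CompleteSpace H]
    (R : H →L[ℂ] H) (hR : ∀ h, ‖R h‖ ≤ ‖h‖) :
    ∃ S : H →L[ℂ] H, ∀ h, ‖S h‖ ^ 2 = ‖h‖ ^ 2 - ‖R h‖ ^ 2 := by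
  let A : H →L[ℂ] H := 1 - (ContinuousLinearMap.adjoint R) * R
  have hA1 : ∀ h, (⟪A h, h⟫) = ((‖h‖ ^ 2 - ‖R h‖ ^ 2 : ℝ) : ℂ) := by
    intro h
    simp only [A, ContinuousLinearMap.sub_apply, ContinuousLinearMap.one_apply,
      ContinuousLinearMap.mul_apply, inner_sub_left, ContinuousLinearMap.adjoint_inner_left]
    rw [inner_self_eq_norm_sq_to_K, inner_self_eq_norm_sq_to_K]
    push_cast
    rfl
  have hA : 0 ≤ A := by
    rw [ContinuousLinearMap.nonneg_iff_isPositive, ContinuousLinearMap.isPositive_iff_complex]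
    intro h
    have h0 : 0 ≤ ‖h‖ ^ 2 - ‖R h‖ ^ 2 := by
      have := hR h
      have := norm_nonneg (R h)
      nlinarith
    rw [hA1]
    exact ⟨by rw [RCLike.re_to_complex, Complex.ofReal_re],
      by rw [RCLike.re_to_complex, Complex.ofReal_re]; exact h0⟩
  refine ⟨CFC.sqrt A, fun h => ?_⟩
  have hs : IsSelfAdjoint (CFC.sqrt A) := (CFC.sqrt_nonneg A).isSelfAdjoint
  have h1 : ⟪A h, h⟫ = ((‖CFC.sqrt A h‖ ^ 2 : ℝ) : ℂ) := by
    conv_lhs => rw [← CFC.sqrt_mul_sqrt_self A hA]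
    rw [ContinuousLinearMap.mul_apply]
    nth_rewrite 1 [← ContinuousLinearMap.isSelfAdjoint_iff'.mp hs]
    rw [ContinuousLinearMap.adjoint_inner_left, inner_self_eq_norm_sq_to_K]
    push_cast
    rfl
  rw [hA1] at h1
  exact_mod_cast h1.symm

theorem gl_inner {H : Type*} [NormedAddCommGroup H] [InnerProductSpace ℂ H]
    {C : H → H} (hC : IsConjugation C) (x y : H) : ⟪C x, C y⟫ = ⟪y, x⟫ := by
  obtain ⟨hadd, hsmul, hnorm, hinv⟩ := hC
  have hre : ∀ x y : H, (⟪C x, C y⟫).re = (⟪x, y⟫).re := by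
    intro x y
    have h1 := norm_add_sq (𝕜 := ℂ) (C x) (C y)
    have h2 := norm_add_sq (𝕜 := ℂ) x y
    rw [← hadd, hnorm, hnorm, hnorm] at h1
    simp only [RCLike.re_to_complex] at h1 h2
    linarith
  have h3 := hre x y
  have h4 := hre x (Complex.I • y)
  rw [hsmul, inner_smul_right, inner_smul_right] at h4
  simp at h4
  rw [← inner_conj_symm y x]
  apply Complex.ext
  · rw [Complex.conj_re]; exact h3
  · rw [Complex.conj_im]; exact h4

theorem gl_symm {H : Type*} [NormedAddCommGroup H] [InnerProductSpace ℂ H]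
    {C : H → H} (hC : IsConjugation C) (x y : H) : ⟪C x, y⟫ = ⟪C y, x⟫ := by
  have := gl_inner hC x (C y)
  rwa [hC.2.2.2] at this

theorem gl_ext {H : Type*} [NormedAddCommGroup H] [InnerProductSpace ℂ H]
    {C : H → H} (hC : IsConjugation C) {x y : H} (h : ∀ z, ⟪C z, x⟫ = ⟪C z, y⟫) : x = y := by
  apply ext_inner_left ℂ
  intro v
  have := h (C v)
  rwa [hC.2.2.2] at this

theorem gl_transpose {H : Type*} [NormedAddCommGroup H] [InnerProductSpace ℂ H] [CompleteSpace H]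
    {C : H → H} (hC : IsConjugation C) (A : H →L[ℂ] H) (hA : ∀ h, ‖A h‖ ≤ ‖h‖) :
    ∃ B : H →L[ℂ] H, (∀ h, ‖B h‖ ≤ ‖h‖) ∧ ∀ x y, ⟪C y, B x⟫ = ⟪C (A y), x⟫ := by
  have hA' : ∀ h, ‖ContinuousLinearMap.adjoint A h‖ ≤ ‖h‖ := by
    intro h
    have h1 : ‖A‖ ≤ 1 := A.opNorm_le_bound zero_le_one (by simpa using hA)
    have h2 := (ContinuousLinearMap.adjoint A).le_opNorm h
    rw [LinearIsometryEquiv.norm_map] at h2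
    nlinarith [norm_nonneg h]
  let B0 : H →ₗ[ℂ] H :=
    { toFun := fun x => C (ContinuousLinearMap.adjoint A (C x))
      map_add' := fun x y => by rw [hC.1, map_add, hC.1]
      map_smul' := fun c x => by rw [hC.2.1, map_smul, hC.2.1]; simp }
  have hB : ∀ h, ‖B0 h‖ ≤ 1 * ‖h‖ := by
    intro h
    change ‖C (ContinuousLinearMap.adjoint A (C h))‖ ≤ _
    rw [hC.2.2.1, one_mul]
    exact (hA' _).trans (hC.2.2.1 h).le
  refine ⟨B0.mkContinuous 1 hB, fun h => by simpa using hB h, fun x y => ?_⟩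
  change ⟪C y, C (ContinuousLinearMap.adjoint A (C x))⟫ = _
  rw [gl_inner hC, ContinuousLinearMap.adjoint_inner_left, gl_symm hC]

/-- Symmetric contractive extension. -/
theorem gl_ext_contraction {H X : Type*} [NormedAddCommGroup H] [InnerProductSpace ℂ H]
    [CompleteSpace H] [AddCommGroup X] [Module ℂ X] {C : H → H} (hC : IsConjugation C)
    (a b : X →ₗ[ℂ] H) (hab : ∀ x, ‖b x‖ ≤ ‖a x‖)
    (hs : ∀ x y, ⟪C (a y), b x⟫ = ⟪C (b y), a x⟫) :
    ∃ M : H →L[ℂ] H, (∀ h, ‖M h‖ ≤ ‖h‖) ∧ (∀ x, M (a x) = b x) ∧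
      ∀ x y, ⟪C y, M x⟫ = ⟪C (M y), x⟫ := by
  obtain ⟨V, hV1, hV2, hV3⟩ := gl_douglas a b hab
  obtain ⟨R, hR1, hR2⟩ := gl_transpose hC V hV1
  obtain ⟨S, hS⟩ := gl_defect R hR1
  let N : Submodule ℂ H := (Submodule.span ℂ (Set.range fun x => C (a x)))ᗮ
  have hN : ∀ z, z ∈ N ↔ ∀ x, ⟪C (a x), z⟫ = 0 := by
    intro z
    constructor
    · intro hz x
      exact hz _ (Submodule.subset_span ⟨x, rfl⟩)
    · intro hz
      rw [Submodule.mem_orthogonal]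
      intro u hu
      induction hu using Submodule.span_induction with
      | mem x hx => obtain ⟨y, rfl⟩ := hx; exact hz y
      | zero => simp
      | add x y _ _ hx hy => rw [inner_add_left, hx, hy, add_zero]
      | smul c x _ hx => rw [inner_smul_left, hx, mul_zero]
  have hRN : ∀ h z, z ∈ N → ⟪R h, z⟫ = 0 := by
    intro h z hz
    have h1 := hR2 h (C z)
    have h2 : V (C z) = 0 := by
      apply hV3
      intro x
      have := (hN z).1 hz x
      rw [← gl_inner hC, hC.2.2.2, ← inner_conj_symm, this, map_zero]
    have hC0 : C 0 = 0 := by simpa using hC.2.1 0 0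
    rw [h2, hC.2.2.2, hC0, inner_zero_left] at h1
    rw [← inner_conj_symm, h1, map_zero]
  have hdec : ∀ x, b x - R (a x) ∈ N := by
    intro x
    rw [hN]
    intro y
    rw [inner_sub_right, hR2, hV2, hs, sub_self]
  let b2 : X →ₗ[ℂ] H := b - R.toLinearMap ∘ₗ a
  have pyth : ∀ h z, z ∈ N → ‖R h + z‖ ^ 2 = ‖R h‖ ^ 2 + ‖z‖ ^ 2 := by
    intro h z hz
    have := norm_add_sq (𝕜 := ℂ) (R h) z
    rw [hRN h z hz] at this
    simpa using this
  have hb2 : ∀ x, ‖b2 x‖ ≤ ‖(S.toLinearMap ∘ₗ a) x‖ := by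
    intro x
    apply le_of_sq_le_sq _ (norm_nonneg _)
    change ‖b x - R (a x)‖ ^ 2 ≤ ‖S (a x)‖ ^ 2
    have h1 := pyth (a x) _ (hdec x)
    rw [add_sub_cancel] at h1
    have h2 := hab x
    rw [hS]
    nlinarith [norm_nonneg (b x)]
  obtain ⟨L, hL1, hL2, -⟩ := gl_douglas (S.toLinearMap ∘ₗ a) b2 hb2
  let W : H →L[ℂ] H := R + N.starProjection ∘L L ∘L S
  have hWdef : ∀ h, W h = R h + N.starProjection (L (S h)) := fun h => rfl
  have hW1 : ∀ h, ‖W h‖ ≤ ‖h‖ := by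
    intro h
    apply le_of_sq_le_sq _ (norm_nonneg _)
    rw [hWdef, pyth h _ (Submodule.starProjection_apply_mem _ _)]
    have h1 := (N.norm_starProjection_apply_le (L (S h))).trans (hL1 _)
    have h2 := hS h
    nlinarith [norm_nonneg (N.starProjection (L (S h)))]
  have hW2 : ∀ x, W (a x) = b x := by
    intro x
    have h1 : L (S (a x)) = b x - R (a x) := hL2 x
    rw [hWdef, h1, Submodule.starProjection_eq_self_iff.2 (hdec x), add_sub_cancel]
  obtain ⟨Wt, hWt1, hWt2⟩ := gl_transpose hC W hW1
  have hWt3 : ∀ x, Wt (a x) = b x := by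
    intro x
    apply gl_ext hC
    intro z
    rw [hWt2, gl_symm hC, hWdef, inner_add_right, hR2, hV2,
      (hN _).1 (Submodule.starProjection_apply_mem _ _), add_zero, gl_symm hC]
  refine ⟨(1 / 2 : ℂ) • (W + Wt), fun h => ?_, fun x => ?_, fun x y => ?_⟩
  · have h1 := norm_add_le (W h) (Wt h)
    have h2 := hW1 h
    have h3 := hWt1 h
    rw [ContinuousLinearMap.smul_apply, ContinuousLinearMap.add_apply, norm_smul]
    norm_num
    linarith
  · rw [ContinuousLinearMap.smul_apply, ContinuousLinearMap.add_apply, hW2, hWt3, ← two_smul ℂ,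
      smul_smul]
    norm_num
  · simp only [ContinuousLinearMap.smul_apply, ContinuousLinearMap.add_apply]
    rw [gl_symm hC _ x]
    simp only [inner_smul_right, inner_add_right]
    rw [hWt2, hWt2, gl_symm hC y, gl_symm hC x]
    ring

/-- Glazman: every densely defined dissipative `C`-symmetric operator
admits a `C`-self-adjoint maximal dissipative extension. -/
theorem stmt_16 {H : Type*} [NormedAddCommGroup H] [InnerProductSpace ℂ H] [CompleteSpace H]
    (C : H → H) (hC : IsConjugation C)
    (T : H →ₗ.[ℂ] H) (hdense : Dense (T.domain : Set H))
    (hdiss : IsDissipative T) (hsym : IsCSymmetricPMap C T) :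
    ∃ T' : H →ₗ.[ℂ] H, T ≤ T' ∧ IsMaximalDissipative T' ∧ IsCSelfAdjointPMap C T' := by
  obtain ⟨hadd, hsmul, hnorm, hinv⟩ := id hC
  have hCneg : ∀ x, C (-x) = -C x := fun x => by
    have := hsmul (-1) x
    simpa using this
  have hCsub : ∀ x y, C (x - y) = C x - C y := fun x y => by
    rw [sub_eq_add_neg, hadd, hCneg, ← sub_eq_add_neg]
  let a : T.domain →ₗ[ℂ] H := T.toFun + Complex.I • T.domain.subtype
  let b : T.domain →ₗ[ℂ] H := T.toFun - Complex.I • T.domain.subtype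
  have ha : ∀ f : T.domain, a f = T f + Complex.I • (f : H) := fun f => rfl
  have hb : ∀ f : T.domain, b f = T f - Complex.I • (f : H) := fun f => rfl
  have key : ∀ x y : H, ‖y + Complex.I • x‖ ^ 2 - ‖y - Complex.I • x‖ ^ 2 = 4 * (⟪x, y⟫).im := by
    intro x y
    have h1 := norm_add_sq (𝕜 := ℂ) y (Complex.I • x)
    have h2 := norm_sub_sq (𝕜 := ℂ) y (Complex.I • x)
    rw [inner_smul_right] at h1 h2
    simp at h1 h2
    have h3 : (⟪y, x⟫).im = -(⟪x, y⟫).im := by rw [← inner_conj_symm y x, Complex.conj_im]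
    rw [h1, h2, h3]; ring
  have hab : ∀ f, ‖b f‖ ≤ ‖a f‖ := by
    intro f
    apply le_of_sq_le_sq _ (norm_nonneg _)
    rw [ha, hb]
    have := key f (T f)
    have := hdiss f
    linarith
  have hs : ∀ x y, ⟪C (a y), b x⟫ = ⟪C (b y), a x⟫ := by
    intro x y
    rw [ha, hb, ha, hb, hadd, hCsub, hsmul]
    simp only [inner_add_left, inner_sub_left, inner_add_right, inner_sub_right, inner_smul_left,
      inner_smul_right]
    rw [hsym x y]
    simp
    ring
  obtain ⟨M, hM1, hM2, hM3⟩ := gl_ext_contraction hC a b hab hs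
  have hI : Complex.I * Complex.I = -1 := Complex.I_mul_I
  have hI2 : (2 * Complex.I) ≠ 0 := by simp
  -- every vector of `dom T` comes from a preimage
  have hTM : ∀ f : T.domain, ∃ h, (f : H) = h - M h ∧ T f = Complex.I • (h + M h) := by
    intro f
    refine ⟨(2 * Complex.I)⁻¹ • a f, ?_, ?_⟩
    · rw [map_smul, hM2, ← smul_sub, eq_inv_smul_iff₀ hI2, ha, hb]
      module
    · rw [map_smul, hM2, ← smul_add, smul_comm, eq_inv_smul_iff₀ hI2, ha, hb]
      module
  let J : H →ₗ[ℂ] H := LinearMap.id - M.toLinearMap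
  have hJ : ∀ h, J h = h - M h := fun h => rfl
  have hinj : Function.Injective J := by
    rw [injective_iff_map_eq_zero]
    intro h hh
    rw [hJ, sub_eq_zero] at hh
    have h1 : ContinuousLinearMap.adjoint M h = h := by
      have hn : ‖ContinuousLinearMap.adjoint M h‖ ≤ ‖h‖ := by
        have h1 : ‖M‖ ≤ 1 := M.opNorm_le_bound zero_le_one (by simpa using hM1)
        have h2 := (ContinuousLinearMap.adjoint M).le_opNorm h
        rw [LinearIsometryEquiv.norm_map] at h2
        nlinarith [norm_nonneg h]
      have h2 := norm_sub_sq (𝕜 := ℂ) (ContinuousLinearMap.adjoint M h) h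
      rw [ContinuousLinearMap.adjoint_inner_left, ← hh, inner_self_eq_norm_sq] at h2
      have h3 : ‖ContinuousLinearMap.adjoint M h - h‖ ^ 2 ≤ 0 := by
        nlinarith [norm_nonneg (ContinuousLinearMap.adjoint M h)]
      have h4 : ‖ContinuousLinearMap.adjoint M h - h‖ = 0 := by
        nlinarith [norm_nonneg (ContinuousLinearMap.adjoint M h - h)]
      exact sub_eq_zero.1 (norm_eq_zero.1 h4)
    apply hdense.eq_zero_of_inner_left ℂ
    intro v hv
    obtain ⟨k, hk, -⟩ := hTM ⟨v, hv⟩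
    change v = _ at hk
    rw [hk, inner_sub_right, ← ContinuousLinearMap.adjoint_inner_left, h1, sub_self]
  let e := LinearEquiv.ofInjective J hinj
  let T' : H →ₗ.[ℂ] H :=
    ⟨LinearMap.range J, (Complex.I • (LinearMap.id + M.toLinearMap)) ∘ₗ e.symm.toLinearMap⟩
  have hT' : ∀ h, ∀ hd : h - M h ∈ T'.domain, T' ⟨h - M h, hd⟩ = Complex.I • (h + M h) := by
    intro h hd
    have h1 : e.symm ⟨h - M h, hd⟩ = h := by
      rw [LinearEquiv.symm_apply_eq]; rfl
    change Complex.I • (e.symm ⟨h - M h, hd⟩ + M (e.symm ⟨h - M h, hd⟩)) = _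
    rw [h1]
  have hdom : ∀ h, h - M h ∈ T'.domain := fun h => ⟨h, rfl⟩
  have hrep : ∀ f : T'.domain, ∃ h, (f : H) = h - M h ∧ T' f = Complex.I • (h + M h) := by
    rintro ⟨f, h, rfl⟩
    exact ⟨h, rfl, hT' h _⟩
  have hsurj : ∀ k, ∃ f : T'.domain, T' f + Complex.I • (f : H) = k := by
    intro k
    refine ⟨⟨_, hdom ((2 * Complex.I)⁻¹ • k)⟩, ?_⟩
    rw [hT']
    have h1 : k = (2 * Complex.I) • ((2 * Complex.I)⁻¹ • k) := (smul_inv_smul₀ hI2 k).symm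
    conv_rhs => rw [h1]
    module
  have hle : T ≤ T' := by
    refine ⟨fun f hf => ?_, ?_⟩
    · obtain ⟨h, h1, -⟩ := hTM ⟨f, hf⟩
      change f = _ at h1
      rw [h1]; exact hdom h
    · rintro f ⟨g, hg⟩ hfg
      change (f : H) = g at hfg
      obtain ⟨h, h1, h2⟩ := hTM f
      rw [h2]
      have : g = h - M h := by rw [← hfg, h1]
      subst this
      exact (hT' h hg).symm
  have hdense' : Dense (T'.domain : Set H) := hdense.mono hle.1
  have hdiss' : IsDissipative T' := by
    intro f
    obtain ⟨h, h1, h2⟩ := hrep f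
    have h3 := key f (T' f)
    have e1 : T' f + Complex.I • (f : H) = (2 * Complex.I) • h := by rw [h1, h2]; module
    have e2 : T' f - Complex.I • (f : H) = (2 * Complex.I) • M h := by rw [h1, h2]; module
    rw [e1, e2, norm_smul, norm_smul] at h3
    have h4 := hM1 h
    have h5 : ‖(2 * Complex.I : ℂ)‖ = 2 := by simp
    rw [h5] at h3
    nlinarith [norm_nonneg (M h)]
  have hsym' : ∀ f g : T'.domain, ⟪C (g : H), T' f⟫ = ⟪C (T' g), (f : H)⟫ := by
    intro f g
    obtain ⟨h, h1, h2⟩ := hrep f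
    obtain ⟨k, k1, k2⟩ := hrep g
    rw [gl_symm hC (T' g), h1, h2, k1, k2, hCsub, hCsub]
    simp only [inner_smul_right, inner_add_right, inner_sub_left]
    rw [hM3 h k, gl_symm hC k h, hM3 k h, gl_symm hC (M h) k, gl_symm hC (M k) (M h),
      gl_symm hC (M k) h, hM3 k h, gl_symm hC (M h) k]
  refine ⟨T', hle, ⟨hdiss', ?_⟩, ?_⟩
  · intro S hS hTS
    apply le_antisymm _ hTS
    have hmem : ∀ f : S.domain, (f : H) ∈ T'.domain := by
      intro f
      obtain ⟨g, hg⟩ := hsurj (S f + Complex.I • (f : H))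
      let g' : S.domain := ⟨g, hTS.1 g.2⟩
      have hg' : T' g = S g' := hTS.2 rfl
      have h1 : S (f - g') = - (Complex.I • ((f - g' : S.domain) : H)) := by
        rw [S.map_sub, ← hg']
        have : ((f - g' : S.domain) : H) = (f : H) - g := rfl
        rw [this, smul_sub]
        rw [← sub_eq_zero] at hg ⊢
        rw [← neg_eq_zero, ← hg]
        abel
      have h2 := hS (f - g')
      rw [h1, inner_neg_right, inner_smul_right, inner_self_eq_norm_sq_to_K] at h2
      have h3 : ‖((f - g' : S.domain) : H)‖ ^ 2 ≤ 0 := by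
        have e : (-(Complex.I * ((‖((f - g' : S.domain) : H)‖ : ℂ)) ^ 2)).im
          = -‖((f - g' : S.domain) : H)‖ ^ 2 := by
          rw [← Complex.ofReal_pow]; simp [-Complex.ofReal_pow]
        have h4 : 0 ≤ (-(Complex.I * ((‖((f - g' : S.domain) : H)‖ : ℂ)) ^ 2)).im := h2
        linarith
      have h4 : ‖((f - g' : S.domain) : H)‖ = 0 := by
        nlinarith [norm_nonneg ((f - g' : S.domain) : H)]
      have h5 : (f : H) - g = 0 := norm_eq_zero.1 h4
      rw [sub_eq_zero.1 h5]
      exact g.2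
    refine ⟨fun f hf => hmem ⟨f, hf⟩, ?_⟩
    intro f g hfg
    exact (hTS.2 hfg.symm).symm
  · have hfor : ∀ (y : T'.adjoint.domain) (f : T'.domain), ⟪T'.adjoint y, (f : H)⟫ = ⟪(y : H), T' f⟫ :=
      fun y f => LinearPMap.adjoint_isFormalAdjoint hdense' y f
    have hC1 : ∀ f : T'.domain, C f ∈ T'.adjoint.domain := fun f =>
      LinearPMap.mem_adjoint_domain_of_exists _ ⟨C (T' f), fun x => (hsym' x f).symm⟩
    have hC2 : ∀ (f : T'.domain) (hf : C f ∈ T'.adjoint.domain),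
        T'.adjoint ⟨C f, hf⟩ = C (T' f) := fun f hf =>
      LinearPMap.adjoint_apply_eq hdense' _ fun x => (hsym' x f).symm
    have hC3 : ∀ y : T'.adjoint.domain, C (y : H) ∈ T'.domain := by
      intro y
      obtain ⟨g, hg⟩ := hsurj (C (T'.adjoint y - Complex.I • (y : H)))
      have hz : (y : H) - C g = 0 := by
        apply ext_inner_right ℂ
        intro k
        obtain ⟨f, rfl⟩ := hsurj k
        have h1 := hfor y f
        have h2 := hsym' f g
        have h3 : C (T' g) = T'.adjoint y - Complex.I • (y : H) + Complex.I • C g := by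
          have := congrArg C hg
          rw [hinv, hadd, hsmul] at this
          rw [← this]
          simp
        rw [h3] at h2
        simp only [inner_add_left, inner_sub_left, inner_smul_left, inner_add_right,
          inner_smul_right, inner_zero_left] at h2 ⊢
        rw [h1] at h2
        simp at h2
        rw [h2]
        ring
      rw [sub_eq_zero.1 hz, hinv]
      exact g.2
    refine ⟨?_, ?_⟩
    · ext f
      constructor
      · intro hf
        exact ⟨C f, hC1 ⟨f, hf⟩, hinv f⟩
      · rintro ⟨y, hy, rfl⟩
        exact hC3 ⟨y, hy⟩
    · rintro ⟨y, hy'⟩ hy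
      have h1 := hC2 ⟨C y, hy⟩ (hC1 ⟨C y, hy⟩)
      have h2 : (⟨C (C y), hC1 ⟨C y, hy⟩⟩ : T'.adjoint.domain) = ⟨y, hy'⟩ :=
        Subtype.ext (hinv y)
      change T'.adjoint ⟨C (C y), hC1 ⟨C y, hy⟩⟩ = _ at h1
      rw [h2] at h1
      change T' ⟨C y, hy⟩ = C (T'.adjoint ⟨y, hy'⟩)
      rw [h1, hinv]
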